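/- Let λ₁ < λ₂ be real numbers with λ₁ > 0, let f(t) = λ₁ + (λ₂ − λ₁)·(2·arctan t + π)/(2π), and let A = {x ∈ ℝ² : λ₁ < ‖x‖ < λ₂} be the open annulus. For α ∈ ℝ let σ_α : ℝ → ℝ² be the rotated spiral σ_α(t) = (f(t)·cos(t + α), f(t)·sin(t + α)). Then the images σ_α(ℝ) for α ∈ [0, 2π) are pairwise disjoint and their union is all of A; equivalently, for every p ∈ A there exist a unique α ∈ [0, 2π) and a unique t ∈ ℝ with p = σ_α(t). Thus the rotated spirals foliate (partition) the open annulus A. -/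

import Mathlib

open Real Set

/-!
The point `σ_α(t)` has polar coordinates `(f t, t + α)`. Since `f` is injective with range
`(λ₁, λ₂)`, the norm of a point of the annulus determines `t`, and its polar angle then determines
`α` modulo `2π`. The same argument applies to any curve whose points lie at distinct positive
distances from the origin: it crosses each circle that it meets exactly once, so its rotations
partition the union of these circles.
-/

section Foliation

variable {ι κ X : Type*} {σ : κ → ι → X} {I : Set κ} {A : Set X}

lemma pairwiseDisjoint_range_of_injOn_uncurry (h : InjOn (Function.uncurry σ) (I ×ˢ univ)) :
    I.PairwiseDisjoint fun α ↦ range (σ α) := by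
  refine fun α hα β hβ hne ↦ disjoint_left.2 ?_
  rintro _ ⟨s, rfl⟩ ⟨t, hst⟩
  have heq : (β, t) = (α, s) := h ⟨hβ, mem_univ t⟩ ⟨hα, mem_univ s⟩ hst
  exact hne (congrArg Prod.fst heq).symm

lemma biUnion_range_eq_image_uncurry (σ : κ → ι → X) (I : Set κ) :
    ⋃ α ∈ I, range (σ α) = Function.uncurry σ '' (I ×ˢ univ) := by
  simp only [← image_univ, iUnion_image_left, image_uncurry_prod]

lemma existsUnique_mem_and_eq_of_bijOn {S : Set κ} {g : κ → X} (h : BijOn g S A) {p : X}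
    (hp : p ∈ A) : ∃! q, q ∈ S ∧ g q = p := by
  obtain ⟨q, hq, rfl⟩ := h.surjOn hp
  exact ⟨q, ⟨hq, rfl⟩, fun r hr ↦ h.injOn hr.1 hq hr.2⟩

end Foliation

section PolarCoordinates

/-- The point of the plane with polar coordinates `(r, θ)`; the radius may be any real number. -/
noncomputable def polarPoint (r : ℝ) (θ : Angle) : EuclideanSpace ℝ (Fin 2) :=
  !₂[r * θ.cos, r * θ.sin]

lemma norm_polarPoint (r : ℝ) (θ : Angle) : ‖polarPoint r θ‖ = |r| := by
  have hsq : (r * θ.cos) ^ 2 + (r * θ.sin) ^ 2 = r ^ 2 := by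
    linear_combination r ^ 2 * θ.cos_sq_add_sin_sq
  simp [polarPoint, EuclideanSpace.norm_eq, Fin.sum_univ_two, hsq, sqrt_sq_eq_abs]

lemma polarPoint_injective {r : ℝ} (hr : r ≠ 0) : Function.Injective (polarPoint r) := by
  intro θ ψ h
  have hcos : θ.cos = ψ.cos := mul_left_cancel₀ hr (congrArg (· 0) h)
  have hsin : θ.sin = ψ.sin := mul_left_cancel₀ hr (congrArg (· 1) h)
  induction θ using Angle.induction_on
  induction ψ using Angle.induction_on
  exact Angle.cos_sin_inj hcos hsin

lemma exists_polarPoint_norm_eq (p : EuclideanSpace ℝ (Fin 2)) : ∃ θ, polarPoint ‖p‖ θ = p := by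
  obtain ⟨z, rfl⟩ := Complex.orthonormalBasisOneI.repr.surjective p
  refine ⟨z.arg, ?_⟩
  ext i
  fin_cases i <;> simp [polarPoint]

lemma bijOn_coe_angle_Ico (a : ℝ) : BijOn ((↑) : ℝ → Angle) (Ico a (a + 2 * π)) univ := by
  have : Fact (0 < 2 * π) := ⟨two_pi_pos⟩
  exact ⟨mapsTo_univ _ _, fun x hx y hy ↦ (AddCircle.coe_eq_coe_iff_of_mem_Ico hx hy).1,
    (AddCircle.coe_image_Ico_eq (2 * π) a).superset⟩

end PolarCoordinates

section RotatedCurve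

variable {ι : Type*} {f : ι → ℝ}

/-- The curve with polar coordinates `(f t, φ t)`, rotated about the origin by the angle `α`. -/
noncomputable def rotatedCurve (f φ : ι → ℝ) (α : ℝ) (t : ι) : EuclideanSpace ℝ (Fin 2) :=
  polarPoint (f t) (φ t + α)

lemma norm_rotatedCurve {t : ι} (ht : 0 ≤ f t) (φ : ι → ℝ) (α : ℝ) :
    ‖rotatedCurve f φ α t‖ = f t := by
  rw [rotatedCurve, norm_polarPoint, abs_of_nonneg ht]

lemma injOn_uncurry_rotatedCurve (hf : Function.Injective f) (hpos : ∀ t, 0 < f t) (φ : ι → ℝ)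
    {I : Set ℝ} (hI : InjOn ((↑) : ℝ → Angle) I) :
    InjOn (Function.uncurry (rotatedCurve f φ)) (I ×ˢ univ) := by
  rintro ⟨α, s⟩ ⟨hα, -⟩ ⟨β, t⟩ ⟨hβ, -⟩ (h : rotatedCurve f φ α s = rotatedCurve f φ β t)
  obtain rfl : s = t := hf <| by
    rw [← norm_rotatedCurve (hpos s).le φ α, h, norm_rotatedCurve (hpos t).le]
  have hangle : (α : Angle) = β := add_left_cancel (polarPoint_injective (hpos s).ne' h)
  exact congrArg (·, s) (hI hα hβ hangle)

lemma surjOn_uncurry_rotatedCurve (f φ : ι → ℝ) {I : Set ℝ}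
    (hI : SurjOn ((↑) : ℝ → Angle) I univ) :
    SurjOn (Function.uncurry (rotatedCurve f φ)) (I ×ˢ univ) {p | ‖p‖ ∈ range f} := by
  rintro p ⟨t, ht⟩
  obtain ⟨θ, hθ⟩ := exists_polarPoint_norm_eq p
  obtain ⟨α, hα, hαθ⟩ := hI (mem_univ (θ - φ t))
  refine ⟨(α, t), ⟨hα, mem_univ t⟩, ?_⟩
  calc
    polarPoint (f t) (φ t + α) = polarPoint ‖p‖ θ := by rw [ht, hαθ, add_sub_cancel]
    _ = p := hθ

lemma bijOn_uncurry_rotatedCurve (hf : Function.Injective f) (hpos : ∀ t, 0 < f t) (φ : ι → ℝ)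
    {I : Set ℝ} (hI : BijOn ((↑) : ℝ → Angle) I univ) :
    BijOn (Function.uncurry (rotatedCurve f φ)) (I ×ˢ univ) {p | ‖p‖ ∈ range f} :=
  ⟨fun q _ ↦ ⟨q.2, (norm_rotatedCurve (hpos q.2).le φ q.1).symm⟩,
    injOn_uncurry_rotatedCurve hf hpos φ hI.injOn, surjOn_uncurry_rotatedCurve f φ hI.surjOn⟩

end RotatedCurve

section Profile

/-- The radius of the spiral: `arctan`, rescaled affinely from `(-π / 2, π / 2)` to `(a, b)`. -/
noncomputable def arctanProfile (a b t : ℝ) : ℝ :=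
  a + (b - a) * (2 * arctan t + π) / (2 * π)

variable {a b : ℝ}

lemma arctanProfile_eq_affine (a b t : ℝ) :
    arctanProfile a b t = (b - a) / π * arctan t + (a + b) / 2 := by
  rw [arctanProfile]
  field

lemma arctanProfile_injective (hab : a ≠ b) : Function.Injective (arctanProfile a b) := by
  intro s t hst
  have hslope : (b - a) / π ≠ 0 := div_ne_zero (sub_ne_zero.2 hab.symm) pi_ne_zero
  rw [arctanProfile_eq_affine, arctanProfile_eq_affine] at hst
  exact arctan_injective (mul_left_cancel₀ hslope (add_right_cancel hst))

lemma range_arctanProfile (hab : a < b) : range (arctanProfile a b) = Ioo a b := by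
  have hslope : 0 < (b - a) / π := div_pos (sub_pos.2 hab) pi_pos
  calc
    range (arctanProfile a b) = (fun x ↦ (b - a) / π * x + (a + b) / 2) '' range arctan := by
      rw [← range_comp]
      exact congrArg range (funext (arctanProfile_eq_affine a b))
    _ = Ioo ((b - a) / π * -(π / 2) + (a + b) / 2) ((b - a) / π * (π / 2) + (a + b) / 2) := by
      rw [range_arctan, image_affine_Ioo hslope]
    _ = Ioo a b := by congr 1 <;> field

lemma arctanProfile_mem_Ioo (hab : a < b) (t : ℝ) : arctanProfile a b t ∈ Ioo a b :=
  range_arctanProfile hab ▸ mem_range_self t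

end Profile

theorem rotated_spirals_foliate_annulus_general {ι : Type*} {f φ : ι → ℝ}
    (hf : Function.Injective f) (hpos : ∀ t, 0 < f t)
    {I : Set ℝ} (hI : BijOn ((↑) : ℝ → Angle) I univ)
    {σ : ℝ → ι → EuclideanSpace ℝ (Fin 2)}
    (hσ : ∀ α t, σ α t = ![f t * cos (φ t + α), f t * sin (φ t + α)])
    {A : Set (EuclideanSpace ℝ (Fin 2))} (hA : A = {p | ‖p‖ ∈ range f}) :
    (∀ α ∈ I, ∀ β ∈ I, α ≠ β → Disjoint (range (σ α)) (range (σ β))) ∧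
      (⋃ α ∈ I, range (σ α)) = A ∧
      ∀ p ∈ A, ∃! q : ℝ × ι, q.1 ∈ I ∧ σ q.1 q.2 = p := by
  obtain rfl : σ = rotatedCurve f φ := funext₂ fun α t ↦ WithLp.ofLp_injective 2 (hσ α t)
  have hbij : BijOn (Function.uncurry (rotatedCurve f φ)) (I ×ˢ univ) A :=
    hA ▸ bijOn_uncurry_rotatedCurve hf hpos φ hI
  refine ⟨pairwiseDisjoint_range_of_injOn_uncurry hbij.injOn, ?_, fun p hp ↦ ?_⟩
  · rw [biUnion_range_eq_image_uncurry, hbij.image_eq]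
  · simpa [Function.uncurry] using existsUnique_mem_and_eq_of_bijOn hbij hp

/-- For `0 < λ₁ < λ₂`, with
`f t = λ₁ + (λ₂ − λ₁) * (2 * arctan t + π) / (2 * π)` and the rotated spirals
`σ_α t = (f t * cos (t + α), f t * sin (t + α))`, the images `σ_α(ℝ)` for
`α ∈ [0, 2π)` are pairwise disjoint and their union is the whole open annulus
`A = {x : λ₁ < ‖x‖ < λ₂}`; equivalently, every `p ∈ A` is `σ_α(t)` for a unique pair
`(α, t)` with `α ∈ [0, 2π)`. Thus the rotated spirals partition (foliate) `A`. -/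
theorem rotated_spirals_foliate_annulus (lam1 lam2 : ℝ) (h1 : 0 < lam1)
    (hlt : lam1 < lam2)
    (f : ℝ → ℝ)
    (hf : ∀ t : ℝ, f t = lam1 + (lam2 - lam1) * (2 * Real.arctan t + π) / (2 * π))
    (σ : ℝ → ℝ → EuclideanSpace ℝ (Fin 2))
    (hσ : ∀ α t : ℝ, σ α t = ![f t * Real.cos (t + α), f t * Real.sin (t + α)])
    (A : Set (EuclideanSpace ℝ (Fin 2)))
    (hA : A = {x : EuclideanSpace ℝ (Fin 2) | lam1 < ‖x‖ ∧ ‖x‖ < lam2}) :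
    (∀ α ∈ Set.Ico (0 : ℝ) (2 * π), ∀ β ∈ Set.Ico (0 : ℝ) (2 * π), α ≠ β →
        Disjoint (Set.range (σ α)) (Set.range (σ β))) ∧
      (⋃ α ∈ Set.Ico (0 : ℝ) (2 * π), Set.range (σ α)) = A ∧
      ∀ p ∈ A, ∃! q : ℝ × ℝ, q.1 ∈ Set.Ico (0 : ℝ) (2 * π) ∧ σ q.1 q.2 = p := by
  obtain rfl : f = arctanProfile lam1 lam2 := funext hf
  exact rotated_spirals_foliate_annulus_general (arctanProfile_injective hlt.ne)
    (fun t ↦ h1.trans (arctanProfile_mem_Ioo hlt t).1) (by simpa using bijOn_coe_angle_Ico 0) hσ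
    (by rw [hA, range_arctanProfile hlt]; rfl)
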